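/- Let α ∈ ℝ and let ψ : ℝ → ℂ be three times continuously differentiable. Define u(x,y) = e^{iαx}·(−ψ'(y), iα·ψ(y)) and let ū denote the componentwise complex conjugate of u. Then the scalar curl of the symmetric convective term satisfies ∇×[(u·∇)ū + (ū·∇)u](x,y) = 2α·Im( \overline{ψ'(y)}·ψ''(y) + \overline{ψ(y)}·ψ'''(y) ); in particular this expression is real-valued and independent of x. -/

import Mathlib

/-- Partial derivative in `x` of a complex-valued field on `ℝ²`. -/
noncomputable def pdx (f : ℝ × ℝ → ℂ) (q : ℝ × ℝ) : ℂ :=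
  deriv (fun x => f (x, q.2)) q.1

/-- Partial derivative in `y` of a complex-valued field on `ℝ²`. -/
noncomputable def pdy (f : ℝ × ℝ → ℂ) (q : ℝ × ℝ) : ℂ :=
  deriv (fun y => f (q.1, y)) q.2

/-!
Taking the curl of `(u·∇)v + (v·∇)u` gives `u·∇ω_v + v·∇ω_u` when `u` and `v` are divergence free
with vorticities `ω_u` and `ω_v`. For `v = ū` the two terms are conjugate, so the curl is
`2 Re (ū·∇ω)`. With `u = ∇⊥(e^{cx}ψ)` and `c = iα`, the vorticity is `ω = e^{cx}(c²ψ + ψ'')`; the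
exponentials in `ū·∇ω` cancel, and the terms coming from `c²ψ` contribute only
`-c³ (|ψ|²)'`, which is purely imaginary.
-/

open ComplexConjugate

section PartialDerivatives

variable {f g : ℝ × ℝ → ℂ} {m n : WithTop ℕ∞}

theorem pdx_neg (f : ℝ × ℝ → ℂ) : pdx (-f) = -pdx f :=
  funext fun _ => deriv.fun_neg

theorem pdy_neg (f : ℝ × ℝ → ℂ) : pdy (-f) = -pdy f :=
  funext fun _ => deriv.fun_neg

theorem pdx_star (f : ℝ × ℝ → ℂ) : pdx (star f) = star (pdx f) :=
  funext fun _ => deriv.star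

theorem pdy_star (f : ℝ × ℝ → ℂ) : pdy (star f) = star (pdy f) :=
  funext fun _ => deriv.star

theorem pdx_add (hf : Differentiable ℝ f) (hg : Differentiable ℝ g) :
    pdx (f + g) = pdx f + pdx g :=
  funext fun _ => deriv_fun_add (by fun_prop) (by fun_prop)

theorem pdy_add (hf : Differentiable ℝ f) (hg : Differentiable ℝ g) :
    pdy (f + g) = pdy f + pdy g :=
  funext fun _ => deriv_fun_add (by fun_prop) (by fun_prop)

theorem pdx_sub (hf : Differentiable ℝ f) (hg : Differentiable ℝ g) :
    pdx (f - g) = pdx f - pdx g :=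
  funext fun _ => deriv_fun_sub (by fun_prop) (by fun_prop)

theorem pdy_sub (hf : Differentiable ℝ f) (hg : Differentiable ℝ g) :
    pdy (f - g) = pdy f - pdy g :=
  funext fun _ => deriv_fun_sub (by fun_prop) (by fun_prop)

theorem pdx_mul (hf : Differentiable ℝ f) (hg : Differentiable ℝ g) :
    pdx (f * g) = pdx f * g + f * pdx g :=
  funext fun _ => deriv_fun_mul (by fun_prop) (by fun_prop)

theorem pdy_mul (hf : Differentiable ℝ f) (hg : Differentiable ℝ g) :
    pdy (f * g) = pdy f * g + f * pdy g :=
  funext fun _ => deriv_fun_mul (by fun_prop) (by fun_prop)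

theorem pdx_eq_fderiv (hf : Differentiable ℝ f) : pdx f = fun q => fderiv ℝ f q (1, 0) :=
  funext fun q => ((hf q).hasFDerivAt.comp_hasDerivAt q.1
    ((hasDerivAt_id q.1).prodMk (hasDerivAt_const q.1 q.2))).deriv

theorem pdy_eq_fderiv (hf : Differentiable ℝ f) : pdy f = fun q => fderiv ℝ f q (0, 1) :=
  funext fun q => ((hf q).hasFDerivAt.comp_hasDerivAt q.2
    ((hasDerivAt_const q.2 q.1).prodMk (hasDerivAt_id q.2))).deriv

theorem contDiff_pdx (hf : ContDiff ℝ n f) (hmn : m + 1 ≤ n) : ContDiff ℝ m (pdx f) := by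
  have hf₁ : ContDiff ℝ 1 f := hf.of_le (le_add_self.trans hmn)
  rw [pdx_eq_fderiv (hf₁.differentiable one_ne_zero)]
  exact (hf.fderiv_right hmn).clm_apply contDiff_const

theorem contDiff_pdy (hf : ContDiff ℝ n f) (hmn : m + 1 ≤ n) : ContDiff ℝ m (pdy f) := by
  have hf₁ : ContDiff ℝ 1 f := hf.of_le (le_add_self.trans hmn)
  rw [pdy_eq_fderiv (hf₁.differentiable one_ne_zero)]
  exact (hf.fderiv_right hmn).clm_apply contDiff_const

theorem differentiable_pdx (hf : ContDiff ℝ 2 f) : Differentiable ℝ (pdx f) :=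
  (contDiff_pdx hf one_add_one_eq_two.le).differentiable one_ne_zero

theorem differentiable_pdy (hf : ContDiff ℝ 2 f) : Differentiable ℝ (pdy f) :=
  (contDiff_pdy hf one_add_one_eq_two.le).differentiable one_ne_zero

theorem pdx_pdy_comm (hf : ContDiff ℝ 2 f) : pdx (pdy f) = pdy (pdx f) := by
  have hf₁ : Differentiable ℝ f := hf.differentiable two_ne_zero
  have hf₂ : Differentiable ℝ (fderiv ℝ f) :=
    (hf.fderiv_right (m := 1) le_rfl).differentiable one_ne_zero
  rw [pdx_eq_fderiv (differentiable_pdy hf), pdy_eq_fderiv (differentiable_pdx hf),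
    pdx_eq_fderiv hf₁, pdy_eq_fderiv hf₁]
  funext q
  have fderiv_apply (v w : ℝ × ℝ) :
      fderiv ℝ (fun p => fderiv ℝ f p v) q w = fderiv ℝ (fderiv ℝ f) q w v := by
    rw [fderiv_clm_apply (hf₂ q) (differentiableAt_const v)]
    simp
  rw [fderiv_apply, fderiv_apply]
  exact (hf.contDiffAt.isSymmSndFDerivAt (by simp)).eq (1, 0) (0, 1)

end PartialDerivatives

section PlanarField

/-- Complex vector fields on `ℝ²`, encoded as the pair of their components, so that sums and the
componentwise conjugate `star` are those of the product of function spaces. -/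
abbrev PlanarField : Type := (ℝ × ℝ → ℂ) × (ℝ × ℝ → ℂ)

/-- The scalar curl `∇×v = ∂ₓv₂ − ∂_yv₁`. -/
noncomputable def scalarCurl (v : PlanarField) : ℝ × ℝ → ℂ := pdx v.2 - pdy v.1

/-- The divergence `∇·v = ∂ₓv₁ + ∂_yv₂`. -/
noncomputable def planarDiv (v : PlanarField) : ℝ × ℝ → ℂ := pdx v.1 + pdy v.2

/-- The perpendicular gradient `∇⊥Φ = (−∂_yΦ, ∂ₓΦ)`: the field with stream function `Φ`. -/
noncomputable def perpGrad (Φ : ℝ × ℝ → ℂ) : PlanarField := (-pdy Φ, pdx Φ)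

/-- The derivative `u·∇f` of a scalar `f` along the field `u`, without conjugation of `u`. -/
noncomputable def advect (u : PlanarField) (f : ℝ × ℝ → ℂ) : ℝ × ℝ → ℂ :=
  u.1 * pdx f + u.2 * pdy f

/-- The convective term `(u·∇)v`. -/
noncomputable def convective (u v : PlanarField) : PlanarField := (advect u v.1, advect u v.2)

variable {u v : PlanarField}

theorem scalarCurl_star (u : PlanarField) : scalarCurl (star u) = star (scalarCurl u) := by
  simp only [scalarCurl, Prod.fst_star, Prod.snd_star, pdx_star, pdy_star, star_sub]

theorem planarDiv_star (u : PlanarField) : planarDiv (star u) = star (planarDiv u) := by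
  simp only [planarDiv, Prod.fst_star, Prod.snd_star, pdx_star, pdy_star, star_add]

theorem advect_star (u : PlanarField) (f : ℝ × ℝ → ℂ) :
    advect u (star f) = star (advect (star u) f) := by
  simp only [advect, Prod.fst_star, Prod.snd_star, pdx_star, pdy_star, star_add, star_mul',
    star_star]

theorem scalarCurl_add (hu₁ : Differentiable ℝ u.1) (hu₂ : Differentiable ℝ u.2)
    (hv₁ : Differentiable ℝ v.1) (hv₂ : Differentiable ℝ v.2) :
    scalarCurl (u + v) = scalarCurl u + scalarCurl v := by
  simp only [scalarCurl, Prod.fst_add, Prod.snd_add, pdx_add hu₂ hv₂, pdy_add hu₁ hv₁]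
  ring

theorem differentiable_advect {f : ℝ × ℝ → ℂ} (hu₁ : Differentiable ℝ u.1)
    (hu₂ : Differentiable ℝ u.2) (hf : ContDiff ℝ 2 f) : Differentiable ℝ (advect u f) :=
  (hu₁.mul (differentiable_pdx hf)).add (hu₂.mul (differentiable_pdy hf))

theorem pdx_advect {f : ℝ × ℝ → ℂ} (hu₁ : Differentiable ℝ u.1) (hu₂ : Differentiable ℝ u.2)
    (hf : ContDiff ℝ 2 f) :
    pdx (advect u f) = pdx u.1 * pdx f + pdx u.2 * pdy f + advect u (pdx f) := by
  have hfx := differentiable_pdx hf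
  have hfy := differentiable_pdy hf
  rw [advect, pdx_add (hu₁.mul hfx) (hu₂.mul hfy), pdx_mul hu₁ hfx, pdx_mul hu₂ hfy, advect,
    pdx_pdy_comm hf]
  ring

theorem pdy_advect {f : ℝ × ℝ → ℂ} (hu₁ : Differentiable ℝ u.1) (hu₂ : Differentiable ℝ u.2)
    (hf : ContDiff ℝ 2 f) :
    pdy (advect u f) = pdy u.1 * pdx f + pdy u.2 * pdy f + advect u (pdy f) := by
  have hfx := differentiable_pdx hf
  have hfy := differentiable_pdy hf
  rw [advect, pdy_add (hu₁.mul hfx) (hu₂.mul hfy), pdy_mul hu₁ hfx, pdy_mul hu₂ hfy, advect,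
    pdx_pdy_comm hf]
  ring

theorem advect_scalarCurl (u : PlanarField) (hv₁ : ContDiff ℝ 2 v.1) (hv₂ : ContDiff ℝ 2 v.2) :
    advect u (scalarCurl v) = advect u (pdx v.2) - advect u (pdy v.1) := by
  have hvx := differentiable_pdx hv₂
  have hvy := differentiable_pdy hv₁
  simp only [scalarCurl, advect, pdx_sub hvx hvy, pdy_sub hvx hvy]
  ring

theorem scalarCurl_convective (hu₁ : Differentiable ℝ u.1) (hu₂ : Differentiable ℝ u.2)
    (hv₁ : ContDiff ℝ 2 v.1) (hv₂ : ContDiff ℝ 2 v.2) :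
    scalarCurl (convective u v) = advect u (scalarCurl v) +
      (pdx u.1 * pdx v.2 + pdx u.2 * pdy v.2 - pdy u.1 * pdx v.1 - pdy u.2 * pdy v.1) := by
  rw [advect_scalarCurl u hv₁ hv₂, scalarCurl, convective, pdx_advect hu₁ hu₂ hv₂,
    pdy_advect hu₁ hu₂ hv₁]
  ring

theorem scalarCurl_convective_add_convective (hu₁ : ContDiff ℝ 2 u.1) (hu₂ : ContDiff ℝ 2 u.2)
    (hv₁ : ContDiff ℝ 2 v.1) (hv₂ : ContDiff ℝ 2 v.2) :
    scalarCurl (convective u v + convective v u) =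
      advect u (scalarCurl v) + advect v (scalarCurl u) +
        planarDiv u * scalarCurl v + planarDiv v * scalarCurl u := by
  have du₁ := hu₁.differentiable two_ne_zero
  have du₂ := hu₂.differentiable two_ne_zero
  have dv₁ := hv₁.differentiable two_ne_zero
  have dv₂ := hv₂.differentiable two_ne_zero
  rw [scalarCurl_add (differentiable_advect du₁ du₂ hv₁) (differentiable_advect du₁ du₂ hv₂)
      (differentiable_advect dv₁ dv₂ hu₁) (differentiable_advect dv₁ dv₂ hu₂),
    scalarCurl_convective du₁ du₂ hv₁ hv₂, scalarCurl_convective dv₁ dv₂ hu₁ hu₂]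
  simp only [scalarCurl, planarDiv]
  ring

theorem scalarCurl_convective_star (hu₁ : ContDiff ℝ 2 u.1) (hu₂ : ContDiff ℝ 2 u.2)
    (hdiv : planarDiv u = 0) (q : ℝ × ℝ) :
    scalarCurl (convective u (star u) + convective (star u) u) q =
      ((2 * (advect (star u) (scalarCurl u) q).re : ℝ) : ℂ) := by
  have hstar₁ : ContDiff ℝ 2 (star u).1 := (starL' ℝ : ℂ ≃L[ℝ] ℂ).contDiff.comp hu₁
  have hstar₂ : ContDiff ℝ 2 (star u).2 := (starL' ℝ : ℂ ≃L[ℝ] ℂ).contDiff.comp hu₂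
  rw [scalarCurl_convective_add_convective hu₁ hu₂ hstar₁ hstar₂, planarDiv_star, hdiv, star_zero,
    zero_mul, zero_mul, add_zero, add_zero, scalarCurl_star, advect_star, add_comm]
  exact Complex.add_conj _

theorem planarDiv_perpGrad {Φ : ℝ × ℝ → ℂ} (hΦ : ContDiff ℝ 2 Φ) : planarDiv (perpGrad Φ) = 0 := by
  rw [planarDiv, perpGrad, pdx_neg, pdx_pdy_comm hΦ, neg_add_cancel]

end PlanarField

section Mode

/-- The scalar field `e^{cx} g(y)`; for `c = iα` it is the Fourier mode in `x` of wave number `α`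
and profile `g`. -/
noncomputable def mode (c : ℂ) (g : ℝ → ℂ) : ℝ × ℝ → ℂ :=
  fun q => Complex.exp (c * q.1) * g q.2

theorem contDiff_mode {n : WithTop ℕ∞} {g : ℝ → ℂ} (c : ℂ) (hg : ContDiff ℝ n g) :
    ContDiff ℝ n (mode c g) := by
  have hx : ContDiff ℝ n fun q : ℝ × ℝ => (q.1 : ℂ) := Complex.ofRealCLM.contDiff.comp contDiff_fst
  exact (contDiff_const.mul hx).cexp.mul (hg.comp contDiff_snd)

theorem neg_mode (c : ℂ) (g : ℝ → ℂ) : -mode c g = mode c (-g) :=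
  funext fun _ => (mul_neg _ _).symm

theorem mode_add (c : ℂ) (f g : ℝ → ℂ) : mode c (f + g) = mode c f + mode c g :=
  funext fun _ => mul_add _ _ _

theorem pdx_mode (c : ℂ) (g : ℝ → ℂ) : pdx (mode c g) = mode c (c • g) := by
  funext q
  have hexp : HasDerivAt (fun x : ℝ => Complex.exp (c * x)) (Complex.exp (c * q.1) * c) q.1 := by
    simpa using (Complex.ofRealCLM.hasDerivAt.const_mul c).cexp
  exact (hexp.mul_const (g q.2)).deriv.trans (mul_assoc _ _ _)

theorem pdy_mode (c : ℂ) (g : ℝ → ℂ) : pdy (mode c g) = mode c (deriv g) :=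
  funext fun q => deriv_const_mul_field (Complex.exp (c * q.1))

theorem perpGrad_mode (c : ℂ) (ψ : ℝ → ℂ) :
    perpGrad (mode c ψ) = (mode c (-deriv ψ), mode c (c • ψ)) := by
  rw [perpGrad, pdx_mode, pdy_mode, neg_mode]

theorem scalarCurl_perpGrad_mode (c : ℂ) (ψ : ℝ → ℂ) :
    scalarCurl (perpGrad (mode c ψ)) = mode c (c ^ 2 • ψ + deriv (deriv ψ)) := by
  rw [scalarCurl, perpGrad, pdy_neg, sub_neg_eq_add, pdx_mode, pdx_mode, pdy_mode, pdy_mode,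
    ← mode_add, smul_smul, sq]

theorem star_mode_mul_mode (α : ℝ) (f g : ℝ → ℂ) (q : ℝ × ℝ) :
    star (mode (Complex.I * α) f q) * mode (Complex.I * α) g q = conj (f q.2) * g q.2 := by
  have hexp : conj (Complex.exp (Complex.I * α * q.1)) * Complex.exp (Complex.I * α * q.1) = 1 := by
    rw [← Complex.exp_conj, ← Complex.exp_add]
    simp
  rw [mode, mode, star_mul', mul_mul_mul_comm]
  exact (congrArg (· * _) hexp).trans (one_mul _)

theorem advect_star_perpGrad_mode (α : ℝ) {ψ : ℝ → ℂ} (hψ : Differentiable ℝ ψ)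
    (hψ₂ : Differentiable ℝ (deriv (deriv ψ))) (q : ℝ × ℝ) :
    advect (star (perpGrad (mode (Complex.I * α) ψ)))
        (scalarCurl (perpGrad (mode (Complex.I * α) ψ))) q =
      -(Complex.I * α) * (conj (deriv ψ q.2) * deriv (deriv ψ) q.2 +
          conj (ψ q.2) * deriv (deriv (deriv ψ)) q.2) -
        (Complex.I * α) ^ 3 * (conj (deriv ψ q.2) * ψ q.2 + conj (ψ q.2) * deriv ψ q.2) := by
  have deriv_profile : deriv ((Complex.I * α) ^ 2 • ψ + deriv (deriv ψ)) q.2 =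
      (Complex.I * α) ^ 2 * deriv ψ q.2 + deriv (deriv (deriv ψ)) q.2 := by
    rw [deriv_add ((hψ q.2).const_smul _) (hψ₂ q.2), deriv_const_smul_field, smul_eq_mul]
  rw [scalarCurl_perpGrad_mode, perpGrad_mode, advect, pdx_mode, pdy_mode]
  simp only [Pi.add_apply, Pi.mul_apply, Prod.fst_star, Prod.snd_star, Pi.star_apply,
    star_mode_mul_mode, deriv_profile, Pi.neg_apply, Pi.smul_apply, smul_eq_mul, map_neg, map_mul,
    Complex.conj_I, Complex.conj_ofReal]
  ring

theorem re_advect_star_perpGrad_mode (α : ℝ) {ψ : ℝ → ℂ} (hψ : Differentiable ℝ ψ)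
    (hψ₂ : Differentiable ℝ (deriv (deriv ψ))) (q : ℝ × ℝ) :
    (advect (star (perpGrad (mode (Complex.I * α) ψ)))
        (scalarCurl (perpGrad (mode (Complex.I * α) ψ))) q).re =
      α * (conj (deriv ψ q.2) * deriv (deriv ψ) q.2 +
        conj (ψ q.2) * deriv (deriv (deriv ψ)) q.2).im := by
  have deriv_normSq_real : conj (deriv ψ q.2) * ψ q.2 + conj (ψ q.2) * deriv ψ q.2 =
      ((2 * (conj (deriv ψ q.2) * ψ q.2).re : ℝ) : ℂ) := by
    rw [← Complex.add_conj, map_mul, Complex.conj_conj, mul_comm (conj (ψ q.2))]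
  have cube_imaginary : (Complex.I * α) ^ 3 = Complex.I * (-α ^ 3 : ℝ) := by
    rw [mul_pow, Complex.I_pow_three]
    push_cast
    ring
  rw [advect_star_perpGrad_mode α hψ hψ₂, deriv_normSq_real, cube_imaginary, Complex.sub_re,
    Complex.re_mul_ofReal, Complex.I_mul_re, Complex.ofReal_im, neg_zero, zero_mul, sub_zero,
    neg_mul, Complex.neg_re, mul_assoc, Complex.I_mul_re, neg_neg, Complex.im_ofReal_mul]

end Mode

/-- For `u = ∇⊥(e^{iαx}ψ(y))` and its componentwise conjugate `ū`, the scalar curl of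
`(u·∇)ū + (ū·∇)u` equals the real, `x`-independent quantity
`2α·Im(conj(ψ')·ψ'' + conj(ψ)·ψ''')`. -/
theorem curl_convective_conjugate (α : ℝ) (ψ : ℝ → ℂ) (hψ : ContDiff ℝ 3 ψ)
    (u1 u2 ub1 ub2 : ℝ × ℝ → ℂ)
    (hu1 : ∀ q : ℝ × ℝ, u1 q = Complex.exp (Complex.I * α * q.1) * (-(deriv ψ q.2)))
    (hu2 : ∀ q : ℝ × ℝ, u2 q = Complex.exp (Complex.I * α * q.1) * (Complex.I * α * ψ q.2))
    (hub1 : ∀ q, ub1 q = (starRingEnd ℂ) (u1 q))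
    (hub2 : ∀ q, ub2 q = (starRingEnd ℂ) (u2 q)) :
    ∀ q : ℝ × ℝ,
      pdx (fun p => u1 p * pdx ub2 p + u2 p * pdy ub2 p
            + ub1 p * pdx u2 p + ub2 p * pdy u2 p) q
        - pdy (fun p => u1 p * pdx ub1 p + u2 p * pdy ub1 p
            + ub1 p * pdx u1 p + ub2 p * pdy u1 p) q
      = ((2 * α * ((starRingEnd ℂ) (deriv ψ q.2) * deriv (deriv ψ) q.2
            + (starRingEnd ℂ) (ψ q.2) * deriv (deriv (deriv ψ)) q.2).im : ℝ) : ℂ) := by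
  let Φ := mode (Complex.I * α) ψ
  have hΦ : ContDiff ℝ 3 Φ := contDiff_mode _ hψ
  have hu : (u1, u2) = perpGrad Φ := by
    rw [perpGrad_mode]
    exact Prod.ext (funext hu1) (funext hu2)
  have hub : (ub1, ub2) = star (perpGrad Φ) := by
    rw [← hu]
    exact Prod.ext (funext hub1) (funext hub2)
  have hψ₂ : Differentiable ℝ (deriv (deriv ψ)) :=
    (hψ.iterate_deriv' 1 2).differentiable one_ne_zero
  intro q
  calc
    _ = scalarCurl (convective (u1, u2) (ub1, ub2) + convective (ub1, ub2) (u1, u2)) q := by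
      simp only [scalarCurl, convective, Prod.mk_add_mk, advect, ← add_assoc]
      rfl
    _ = ((2 * (advect (star (perpGrad Φ)) (scalarCurl (perpGrad Φ)) q).re : ℝ) : ℂ) := by
      rw [hu, hub]
      exact scalarCurl_convective_star (contDiff_pdy hΦ two_add_one_eq_three.le).neg
        (contDiff_pdx hΦ two_add_one_eq_three.le)
        (planarDiv_perpGrad (hΦ.of_le (by norm_num))) q
    _ = _ := by
      rw [re_advect_star_perpGrad_mode α (hψ.differentiable three_ne_zero) hψ₂, mul_assoc]
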